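/- arXiv:2604.00720 — 2 statements merged into one kernel-verified Lean document; each statement's English description precedes it below -/
import Mathlib

section
/- For every n ≥ 2, the set of special unitary matrices with Gaussian-rational entries is dense in SU(n,ℂ): for every n×n complex matrix A with Aᴴ·A = 1 (Aᴴ the conjugate transpose) and det A = 1, and every ε > 0, there exists an n×n complex matrix B with Bᴴ·B = 1, det B = 1, such that every entry of B has rational real part and rational imaginary part, and ‖A − B‖ < ε. -/
open Matrix

/-- The field `ℚ(i)`, as a subfield of `ℂ`. -/
def gaussianRationals : Subfield ℂ where
  carrier := {z | (∃ q : ℚ, z.re = q) ∧ ∃ q : ℚ, z.im = q}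
  mul_mem' := by
    rintro a b ⟨⟨p, hp⟩, q, hq⟩ ⟨⟨r, hr⟩, s, hs⟩
    exact ⟨⟨p * r - q * s, by simp [hp, hq, hr, hs]⟩, p * s + q * r, by simp [hp, hq, hr, hs]⟩
  one_mem' := ⟨⟨1, by simp⟩, 0, by simp⟩
  add_mem' := by
    rintro a b ⟨⟨p, hp⟩, q, hq⟩ ⟨⟨r, hr⟩, s, hs⟩
    exact ⟨⟨p + r, by simp [hp, hr]⟩, q + s, by simp [hq, hs]⟩
  zero_mem' := ⟨⟨0, by simp⟩, 0, by simp⟩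
  neg_mem' := by
    rintro a ⟨⟨p, hp⟩, q, hq⟩
    exact ⟨⟨-p, by simp [hp]⟩, -q, by simp [hq]⟩
  inv_mem' := by
    rintro a ⟨⟨p, hp⟩, q, hq⟩
    exact ⟨⟨p / (p * p + q * q), by simp [Complex.inv_re, Complex.normSq_apply, hp, hq]⟩,
      -q / (p * p + q * q), by simp [Complex.inv_im, Complex.normSq_apply, hp, hq]⟩

namespace gaussianRationals

theorem mem_iff {z : ℂ} :
    z ∈ gaussianRationals ↔ (∃ q : ℚ, z.re = q) ∧ ∃ q : ℚ, z.im = q :=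
  Iff.rfl

theorem I_mem : Complex.I ∈ gaussianRationals :=
  ⟨⟨0, by simp⟩, 1, by simp⟩

theorem star_mem {z : ℂ} (hz : z ∈ gaussianRationals) : star z ∈ gaussianRationals := by
  obtain ⟨hre, q, hq⟩ := hz
  exact ⟨hre, -q, by simp [hq]⟩

theorem dense : Dense (gaussianRationals : Set ℂ) := by
  have h := (Rat.denseRange_cast (𝕜 := ℝ)).prodMap (Rat.denseRange_cast (𝕜 := ℝ))
  refine (Complex.equivRealProdCLM.symm.surjective.denseRange.comp h
    Complex.equivRealProdCLM.symm.continuous).mono ?_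
  rintro _ ⟨⟨p, q⟩, rfl⟩
  exact ⟨⟨p, by simp⟩, q, by simp⟩

theorem infinite_unitary : {z | z ∈ gaussianRationals ∧ z * star z = 1}.Infinite := by
  have hne : ∀ t : ℕ, (1 + t * Complex.I : ℂ) ≠ 0 := fun t h ↦ by
    simpa using congrArg Complex.re h
  have hne' : ∀ t : ℕ, (1 - t * Complex.I : ℂ) ≠ 0 := fun t h ↦ by
    simpa using congrArg Complex.re h
  refine Set.infinite_of_injective_forall_mem
    (f := fun t : ℕ ↦ (1 - t * Complex.I) / (1 + t * Complex.I)) (fun s t h ↦ ?_) fun t ↦ ⟨?_, ?_⟩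
  · rw [div_eq_div_iff (hne s) (hne t)] at h
    have him := congrArg Complex.im h
    simp at him
    exact_mod_cast (by linarith : (s : ℝ) = t)
  · have ht := mul_mem (natCast_mem gaussianRationals t) I_mem
    exact div_mem (sub_mem (one_mem _) ht) (add_mem (one_mem _) ht)
  · have h₁ := hne t
    have h₂ := hne' t
    simp [← sub_eq_add_neg]
    field_simp

end gaussianRationals

namespace Matrix

theorem mul_apply_mem {m R S : Type*} [Fintype m] [CommRing R] [SetLike S R]
    [SubringClass S R] {K : S} {M N : Matrix m m R} (hM : ∀ i j, M i j ∈ K)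
    (hN : ∀ i j, N i j ∈ K) (i j : m) : (M * N) i j ∈ K :=
  sum_mem fun k _ ↦ mul_mem (hM i k) (hN k j)

theorem one_apply_mem {m R S : Type*} [DecidableEq m] [CommRing R] [SetLike S R] [SubringClass S R]
    (K : S) (i j : m) : (1 : Matrix m m R) i j ∈ K := by
  rw [one_apply]
  split_ifs
  exacts [one_mem K, zero_mem K]

theorem dense_setOf_forall_mem {m R : Type*} [TopologicalSpace R] {K : Set R} (hK : Dense K) :
    Dense {M : Matrix m m R | ∀ i j, M i j ∈ K} := by
  have h : Dense (Set.pi Set.univ fun _ : m ↦ Set.pi Set.univ fun _ : m ↦ K) :=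
    dense_pi _ fun _ _ ↦ dense_pi _ fun _ _ ↦ hK
  simp only [Set.pi, Set.mem_univ, forall_const] at h
  exact h

variable {n : Type*} [Fintype n] [DecidableEq n]

theorem det_mem_of_forall_mem {R S : Type*} [CommRing R] [SetLike S R] [SubringClass S R] {K : S}
    {M : Matrix n n R} (hM : ∀ i j, M i j ∈ K) : M.det ∈ K := by
  rw [det_apply]
  exact sum_mem fun σ _ ↦ by
    rw [Units.smul_def]
    exact zsmul_mem (prod_mem fun i _ ↦ hM _ _) _

theorem inv_apply_mem {F : Type*} [Field F] {K : Subfield F} {M : Matrix n n F}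
    (hM : ∀ i j, M i j ∈ K) (i j : n) : M⁻¹ i j ∈ K := by
  rw [inv_def, Ring.inverse_eq_inv', smul_apply, adjugate_apply]
  refine mul_mem (inv_mem (det_mem_of_forall_mem hM)) (det_mem_of_forall_mem fun k l ↦ ?_)
  rw [updateRow_apply]
  split_ifs
  · rw [Pi.single_apply]
    split_ifs
    exacts [one_mem K, zero_mem K]
  · exact hM k l

/-- The Cayley transform. -/
noncomputable def cayley (Y : Matrix n n ℂ) : Matrix n n ℂ :=
  (1 - Y) * (1 + Y)⁻¹

theorem continuousAt_cayley {Y : Matrix n n ℂ} (hY : (1 + Y).det ≠ 0) :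
    ContinuousAt cayley Y := by
  unfold cayley
  simp only [inv_def, Ring.inverse_eq_inv']
  have hdet : ContinuousAt (fun Y : Matrix n n ℂ ↦ (1 + Y).det) Y :=
    (continuous_const.add continuous_id).matrix_det.continuousAt
  have hadj : ContinuousAt (fun Y : Matrix n n ℂ ↦ (1 + Y).adjugate) Y :=
    (continuous_const.add continuous_id).matrix_adjugate.continuousAt
  exact (continuousAt_const.sub continuousAt_id).mul ((hdet.inv₀ hY).smul hadj)

theorem cayley_mem_unitaryGroup {Y : Matrix n n ℂ} (hY : Yᴴ = -Y) (hdet : (1 + Y).det ≠ 0) :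
    cayley Y ∈ unitaryGroup n ℂ := by
  have hu : IsUnit (1 + Y).det := isUnit_iff_ne_zero.2 hdet
  have hstar : (1 + Y)ᴴ = 1 - Y := by simp [hY, sub_eq_add_neg]
  have hu' : IsUnit (1 - Y).det := by
    rw [← hstar, det_conjTranspose]
    exact hu.star
  have hcomm : (1 + Y) * (1 - Y) = (1 - Y) * (1 + Y) := by noncomm_ring
  rw [mem_unitaryGroup_iff', star_eq_conjTranspose, cayley, conjTranspose_mul,
    conjTranspose_nonsing_inv, hstar, ← hstar, conjTranspose_conjTranspose, hstar]
  calc (1 - Y)⁻¹ * (1 + Y) * ((1 - Y) * (1 + Y)⁻¹)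
      = (1 - Y)⁻¹ * ((1 + Y) * (1 - Y)) * (1 + Y)⁻¹ := by simp only [Matrix.mul_assoc]
    _ = ((1 - Y)⁻¹ * (1 - Y)) * ((1 + Y) * (1 + Y)⁻¹) := by
        rw [hcomm]; simp only [Matrix.mul_assoc]
    _ = 1 := by rw [nonsing_inv_mul _ hu', mul_nonsing_inv _ hu, one_mul]

theorem one_add_cayley {C : Matrix n n ℂ} (hC : (1 + C).det ≠ 0) :
    1 + cayley C = (2 : ℂ) • (1 + C)⁻¹ := by
  have hu : IsUnit (1 + C).det := isUnit_iff_ne_zero.2 hC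
  calc 1 + cayley C = (1 + C) * (1 + C)⁻¹ + (1 - C) * (1 + C)⁻¹ := by
        rw [mul_nonsing_inv _ hu, cayley]
    _ = (2 : ℂ) • (1 + C)⁻¹ := by rw [two_smul]; noncomm_ring

theorem det_one_add_cayley_ne_zero {C : Matrix n n ℂ} (hC : (1 + C).det ≠ 0) :
    (1 + cayley C).det ≠ 0 := by
  rw [one_add_cayley hC, det_smul, det_nonsing_inv, Ring.inverse_eq_inv']
  exact mul_ne_zero (pow_ne_zero _ two_ne_zero) (inv_ne_zero hC)

theorem cayley_cayley {C : Matrix n n ℂ} (hC : (1 + C).det ≠ 0) : cayley (cayley C) = C := by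
  have hu : IsUnit (1 + C).det := isUnit_iff_ne_zero.2 hC
  have hu' : IsUnit (1 + cayley C).det := isUnit_iff_ne_zero.2 (det_one_add_cayley_ne_zero hC)
  have h : 1 - cayley C = C * (1 + cayley C) := by
    have h₁ : 1 - cayley C = (1 + C) * (1 + C)⁻¹ - (1 - C) * (1 + C)⁻¹ := by
      rw [mul_nonsing_inv _ hu, cayley]
    rw [h₁, one_add_cayley hC, two_smul]
    noncomm_ring
  conv_lhs => rw [cayley]
  rw [h, mul_nonsing_inv_cancel_right _ _ hu']

theorem conjTranspose_cayley {C : Matrix n n ℂ} (hC : C ∈ unitaryGroup n ℂ)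
    (hdet : (1 + C).det ≠ 0) : (cayley C)ᴴ = -cayley C := by
  have hu : IsUnit (1 + C).det := isUnit_iff_ne_zero.2 hdet
  have huH : IsUnit ((1 + C)ᴴ).det := by
    rw [det_conjTranspose]
    exact hu.star
  have hC' : Cᴴ * C = 1 := mem_unitaryGroup_iff'.1 hC
  have h : (1 - C)ᴴ * (1 + C) = (1 + C)ᴴ * -(1 - C) := by
    simp only [conjTranspose_sub, conjTranspose_add, conjTranspose_one, mul_add, mul_sub, mul_neg,
      add_mul, sub_mul, hC', one_mul, mul_one]
    abel
  rw [cayley, conjTranspose_mul, conjTranspose_nonsing_inv, ← neg_mul]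
  calc ((1 + C)ᴴ)⁻¹ * (1 - C)ᴴ
      = ((1 + C)ᴴ)⁻¹ * ((1 - C)ᴴ * (1 + C)) * (1 + C)⁻¹ := by
        rw [Matrix.mul_assoc, mul_nonsing_inv_cancel_right _ _ hu]
    _ = -(1 - C) * (1 + C)⁻¹ := by rw [h, nonsing_inv_mul_cancel_left _ _ huH]

/-- Rescale the column `i` of `V` by the conjugate of `det V`. For unitary `V` the result is
special unitary. -/
noncomputable def normalizeDet (i : n) (V : Matrix n n ℂ) : Matrix n n ℂ :=
  V * diagonal (Pi.mulSingle i (star V.det))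

theorem det_normalizeDet (i : n) {V : Matrix n n ℂ} (hV : V ∈ unitaryGroup n ℂ) :
    (normalizeDet i V).det = 1 := by
  have h : V.det * star V.det = 1 := (Unitary.mem_iff.1 (det_of_mem_unitary hV)).2
  rw [normalizeDet, det_mul, det_diagonal, Finset.prod_pi_mulSingle', if_pos (Finset.mem_univ i), h]

theorem normalizeDet_mem_unitaryGroup (i : n) {V : Matrix n n ℂ} (hV : V ∈ unitaryGroup n ℂ) :
    normalizeDet i V ∈ unitaryGroup n ℂ := by
  refine mul_mem hV (mem_unitaryGroup_iff.2 ?_)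
  have h : star V.det * V.det = 1 := (Unitary.mem_iff.1 (det_of_mem_unitary hV)).1
  rw [star_eq_conjTranspose, diagonal_conjTranspose, diagonal_mul_diagonal, ← diagonal_one]
  congr 1
  ext j
  rcases eq_or_ne j i with rfl | hj
  · simpa using h
  · simp [hj]

theorem normalizeDet_of_det_eq_one (i : n) {V : Matrix n n ℂ} (hV : V.det = 1) :
    normalizeDet i V = V := by
  simp [normalizeDet, hV]

theorem continuous_normalizeDet (i : n) : Continuous (normalizeDet i) :=
  continuous_id.mul (((continuous_mulSingle i).comp continuous_id.matrix_det.star).matrix_diagonal)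

theorem normalizeDet_apply_mem (i : n) {V : Matrix n n ℂ}
    (hV : ∀ j k, V j k ∈ gaussianRationals) (j k : n) :
    normalizeDet i V j k ∈ gaussianRationals := by
  rw [normalizeDet, mul_diagonal, Pi.mulSingle_apply]
  refine mul_mem (hV j k) ?_
  split_ifs
  exacts [gaussianRationals.star_mem (det_mem_of_forall_mem hV), one_mem _]

theorem exists_gaussianRational_det_add_smul_ne_zero (A : Matrix n n ℂ) :
    ∃ z ∈ gaussianRationals, z * star z = 1 ∧ (1 + star z • A).det ≠ 0 := by
  have hfin : {z : ℂ | (-A).charpoly.IsRoot z}.Finite :=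
    Polynomial.finite_setOfPred_isRoot (charpoly_monic _).ne_zero
  obtain ⟨z, ⟨hzK, hz⟩, hroot⟩ :=
    (gaussianRationals.infinite_unitary.sdiff hfin).nonempty
  refine ⟨z, hzK, hz, fun h ↦ hroot ?_⟩
  have hfac : scalar n z - -A = z • (1 + star z • A) := by
    rw [smul_add, smul_smul, hz, one_smul, sub_neg_eq_add, scalar_apply, smul_one_eq_diagonal]
  rw [Set.mem_ofPred_eq, Polynomial.IsRoot, eval_charpoly, hfac, det_smul, h, mul_zero]

/-- Gaussian-rational special unitary matrices are dense in the special unitary group. -/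
theorem specialUnitary_subset_closure_gaussianRational [Nonempty n] :
    {A : Matrix n n ℂ | A ∈ unitaryGroup n ℂ ∧ A.det = 1} ⊆
      closure {B | (B ∈ unitaryGroup n ℂ ∧ B.det = 1) ∧ ∀ i j, B i j ∈ gaussianRationals} := by
  rintro A ⟨hA, hdetA⟩
  obtain ⟨i⟩ := ‹Nonempty n›
  obtain ⟨z, hzK, hz, hdet⟩ := exists_gaussianRational_det_add_smul_ne_zero A
  have hsmul : ∀ {w : ℂ}, w * star w = 1 → ∀ {M : Matrix n n ℂ}, M ∈ unitaryGroup n ℂ →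
      w • M ∈ unitaryGroup n ℂ := by
    intro w hw M hM
    rw [mem_unitaryGroup_iff] at hM ⊢
    rw [star_smul, smul_mul_smul_comm, hM, hw, one_smul]
  have hC : star z • A ∈ unitaryGroup n ℂ := hsmul (by rw [star_star, mul_comm, hz]) hA
  set X := cayley (star z • A) with hX
  -- Every `Z` yields a skew-Hermitian matrix, equal to `X` when `Z = X`.
  let skew : Matrix n n ℂ → Matrix n n ℂ := fun Z ↦ (2⁻¹ : ℂ) • (Z - Zᴴ)
  have hskew : Continuous skew := by
    simp only [skew]
    fun_prop
  have hskewX : skew X = X := by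
    simp only [skew, hX, conjTranspose_cayley hC hdet, sub_neg_eq_add, ← two_smul ℂ (cayley _),
      smul_smul]
    simp
  let F : Matrix n n ℂ → Matrix n n ℂ := fun Z ↦ normalizeDet i (z • cayley (skew Z))
  have hdetX : (1 + skew X).det ≠ 0 := by
    rw [hskewX]
    exact det_one_add_cayley_ne_zero hdet
  have hFX : F X = A := by
    simp only [F, hskewX]
    rw [hX, cayley_cayley hdet, smul_smul, hz, one_smul, normalizeDet_of_det_eq_one i hdetA]
  have hF : ContinuousAt F X :=
    (continuous_normalizeDet i).continuousAt.comp
      (((continuousAt_cayley hdetX).comp hskew.continuousAt).const_smul z)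
  have hev : ∀ᶠ Z in nhds X, (1 + skew Z).det ≠ 0 :=
    (continuous_const.add hskew).matrix_det.continuousAt.eventually_ne hdetX
  rw [mem_closure_iff_nhds]
  intro U hU
  obtain ⟨Z, ⟨hZU, hZdet⟩, hZK⟩ := mem_closure_iff_nhds.1
    (dense_setOf_forall_mem gaussianRationals.dense X) _
    (Filter.inter_mem (hF (hFX.symm ▸ hU)) hev)
  have hskewZ : (skew Z)ᴴ = -skew Z := by
    simp [skew, conjTranspose_smul, ← smul_neg]
  have hskewK : ∀ j k, skew Z j k ∈ gaussianRationals := fun j k ↦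
    mul_mem (inv_mem (ofNat_mem _ 2))
      (sub_mem (hZK j k) (gaussianRationals.star_mem (hZK k j)))
  have hV := hsmul hz (cayley_mem_unitaryGroup hskewZ hZdet)
  refine ⟨F Z, hZU, ⟨normalizeDet_mem_unitaryGroup i hV, det_normalizeDet i hV⟩,
    normalizeDet_apply_mem i fun j k ↦ mul_mem hzK (mul_apply_mem ?_ (inv_apply_mem ?_) j k)⟩
  · exact fun j k ↦ sub_mem (one_apply_mem _ j k) (hskewK j k)
  · exact fun j k ↦ add_mem (one_apply_mem _ j k) (hskewK j k)

end Matrix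

/-- For every `n ≥ 2`, the special unitary matrices with Gaussian-rational entries are
dense in `SU(n, ℂ)`: given `A` with `Aᴴ * A = 1` and `det A = 1`, and `ε > 0`, there is
`B` with `Bᴴ * B = 1`, `det B = 1`, each entry of `B` having rational real and imaginary
parts, and every entry of `A - B` of norm less than `ε`. -/
theorem su_gaussian_rational_dense (n : ℕ) (hn : 2 ≤ n)
    (A : Matrix (Fin n) (Fin n) ℂ) (hA : Aᴴ * A = 1) (hdetA : A.det = 1)
    (ε : ℝ) (hε : 0 < ε) :
    ∃ B : Matrix (Fin n) (Fin n) ℂ,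
      Bᴴ * B = 1 ∧ B.det = 1 ∧
      (∀ i j, (∃ q : ℚ, (B i j).re = (q : ℝ)) ∧ ∃ q : ℚ, (B i j).im = (q : ℝ)) ∧
      ∀ i j, ‖A i j - B i j‖ < ε := by
  have : Nonempty (Fin n) := ⟨⟨0, by omega⟩⟩
  have hU : {B : Matrix (Fin n) (Fin n) ℂ | ∀ i j, ‖A i j - B i j‖ < ε} ∈ nhds A := by
    simp only [Set.ofPred_forall]
    refine Filter.iInter_mem.2 fun i ↦ Filter.iInter_mem.2 fun j ↦ ?_
    have hcont : Continuous fun B : Matrix (Fin n) (Fin n) ℂ ↦ ‖A i j - B i j‖ :=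
      (continuous_const.sub (continuous_id.matrix_elem i j)).norm
    exact (isOpen_lt hcont continuous_const).mem_nhds (by simpa using hε)
  obtain ⟨B, hAB, ⟨hB, hdetB⟩, hBK⟩ := mem_closure_iff_nhds.1
    (specialUnitary_subset_closure_gaussianRational ⟨mem_unitaryGroup_iff'.2 hA, hdetA⟩) _ hU
  exact ⟨B, mem_unitaryGroup_iff'.1 hB, hdetB, fun i j ↦ gaussianRationals.mem_iff.1 (hBK i j), hAB⟩
end

section
/- For every n ≥ 1, the set of quaternionic unitary matrices with rational-quaternion entries is dense in the compact symplectic group Sp(n): for every n×n matrix A over the real quaternions ℍ with Aᴴ·A = 1 (Aᴴ the quaternionic conjugate transpose), and every ε > 0, there exists an n×n quaternionic matrix B with Bᴴ·B = 1 such that every entry of B has all four coordinates (real part and the coefficients of i, j, k) rational, and ‖A − B‖ < ε. -/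
open Matrix

open scoped Quaternion

section DivisionRing

variable {K ι : Type*} [DivisionRing K] [Fintype ι] [DecidableEq ι]

/-- A square matrix over a division ring whose left kernel is trivial is invertible. -/
theorem Matrix.isUnit_of_vecMul_eq_zero {M : Matrix ι ι K} (h : ∀ v, v ᵥ* M = 0 → v = 0) :
    IsUnit M := by
  have hinj : Function.Injective (toLinearMapRight' M) :=
    (injective_iff_map_eq_zero _).2 h
  obtain ⟨N, hN⟩ := vecMul_surjective_iff_exists_left_inverse.1
    (LinearMap.surjective_of_injective hinj)
  exact IsUnit.of_mul_eq_one_right N hN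

/-- Over a division ring of characteristic not two, every square matrix becomes invertible after
adding a suitable diagonal matrix of signs. -/
theorem Matrix.exists_sign_isUnit_add_diagonal (h2 : (2 : K) ≠ 0) :
    ∀ {n : ℕ} (M : Matrix (Fin n) (Fin n) K),
      ∃ d : Fin n → K, (∀ i, d i = 1 ∨ d i = -1) ∧ IsUnit (M + diagonal d)
  | 0, M => ⟨fun _ => 1, fun _ => Or.inl rfl, isUnit_of_subsingleton _⟩
  | n + 1, M => by
    obtain ⟨d, hd, hu⟩ := exists_sign_isUnit_add_diagonal h2 (M.submatrix Fin.succ Fin.succ)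
    set N := M.submatrix Fin.succ Fin.succ + diagonal d with hN
    obtain ⟨N', hN'⟩ := hu.exists_left_inv
    set b : Fin n → K := fun j => M 0 j.succ
    set w : Fin n → K := b ᵥ* N'
    have hw : w ᵥ* N = b := by simp [w, hN']
    obtain ⟨e, he, hne⟩ : ∃ e : K, (e = 1 ∨ e = -1) ∧
        M 0 0 + e - w ⬝ᵥ (fun i => M i.succ 0) ≠ 0 := by
      by_cases h : M 0 0 + 1 - w ⬝ᵥ (fun i => M i.succ 0) = 0
      · refine ⟨-1, Or.inr rfl, fun h' => h2 ?_⟩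
        rw [← sub_self (0 : K)]
        nth_rewrite 1 [← h]
        rw [← h', ← one_add_one_eq_two]
        abel
      · exact ⟨1, Or.inl rfl, h⟩
    refine ⟨Fin.cons e d, Fin.cases he hd, isUnit_of_vecMul_eq_zero fun v hv => ?_⟩
    set x : Fin n → K := fun i => v i.succ with hx
    have hxN : (x + v 0 • w) ᵥ* N = 0 := by
      rw [add_vecMul, smul_vecMul, hw]
      funext j
      have := congrFun hv j.succ
      simp only [vecMul, dotProduct, Fin.sum_univ_succ, add_apply, diagonal_apply,
        Fin.succ_inj, Fin.cons_succ, (Fin.succ_ne_zero j).symm, if_false, add_zero] at this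
      simp only [hN, x, b, vecMul, dotProduct, Pi.add_apply, Pi.smul_apply, smul_eq_mul, add_apply,
        submatrix_apply, diagonal_apply]
      rw [add_comm]
      exact this
    have hxw : x = -(v 0 • w) := by
      refine eq_neg_of_add_eq_zero_left ?_
      have := congrArg (· ᵥ* hu.unit⁻¹.val) hxN
      simpa [vecMul_vecMul] using this
    have h0 : v 0 = 0 := by
      have := congrFun hv 0
      simp only [vecMul, dotProduct, Fin.sum_univ_succ, add_apply, diagonal_apply,
        Fin.succ_ne_zero, if_true, if_false, add_zero, Fin.cons_zero] at this
      have hs : ∑ i : Fin n, v i.succ * M i.succ 0 = -(v 0 * w ⬝ᵥ (fun i => M i.succ 0)) := by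
        change x ⬝ᵥ (fun i => M i.succ 0) = _
        rw [hxw, neg_dotProduct, smul_dotProduct, smul_eq_mul]
      rw [hs, ← sub_eq_add_neg, ← mul_sub] at this
      exact (mul_eq_zero.1 this).resolve_right hne
    funext i
    refine Fin.cases h0 (fun j => ?_) i
    simpa [h0, hx] using congrFun hxw j

end DivisionRing

section Cayley

variable {R : Type*} [Ring R] [StarRing R]

/-- The Cayley transform of a skew-adjoint element is unitary. -/
theorem star_cayley_mul_cayley {s : R} (hs : star s = -s) (hu : IsUnit (1 + s)) :
    star (Ring.inverse (1 + s) * (1 - s)) * (Ring.inverse (1 + s) * (1 - s)) = 1 := by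
  have hstar : star (1 + s) = 1 - s := by rw [star_add, star_one, hs, sub_eq_add_neg]
  have hstar' : star (1 - s) = 1 + s := by rw [← hstar, star_star]
  have hu' : IsUnit (1 - s) := hstar ▸ hu.star
  have hc : Commute (1 - s) (1 + s) := by
    simp only [commute_iff_eq]
    noncomm_ring
  have hci := hc.ringInverse_ringInverse
  rw [star_mul, hstar', ← Ring.inverse_star, hstar, mul_assoc, ← mul_assoc _ _ (1 - s), hci.eq,
    mul_assoc, Ring.inverse_mul_cancel _ hu', mul_one, Ring.mul_inverse_cancel _ hu]

/-- A unitary element `a` with `1 + a` invertible is the Cayley transform of a skew-adjoint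
element. -/
theorem exists_cayley_eq (htwo : IsUnit (2 : R)) {a : R} (ha : a * star a = 1)
    (hu : IsUnit (1 + a)) :
    ∃ s : R, star s = -s ∧ IsUnit (1 + s) ∧ Ring.inverse (1 + s) * (1 - s) = a := by
  obtain ⟨u, hu⟩ := hu
  have hstar : star (u : R) = 1 + star a := by rw [hu, star_add, star_one]
  have h1 : 1 + (↑u⁻¹ : R) * (1 - a) = ↑u⁻¹ * 2 := by
    nth_rewrite 1 [← u.inv_mul]
    rw [← mul_add, hu, ← one_add_one_eq_two]
    congr 1
    abel
  have h2 : 1 - (↑u⁻¹ : R) * (1 - a) = ↑u⁻¹ * 2 * a := by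
    nth_rewrite 1 [← u.inv_mul]
    rw [← mul_sub, hu, mul_assoc, two_mul]
    congr 1
    abel
  have hu1 : IsUnit (1 + (↑u⁻¹ : R) * (1 - a)) := by
    rw [h1]
    exact u⁻¹.isUnit.mul htwo
  refine ⟨↑u⁻¹ * (1 - a), ?_, hu1, ?_⟩
  · have key : (u : R) * star (1 - a) = -((1 - a) * star (u : R)) := by
      rw [hstar, hu, star_sub, star_one]
      simp only [mul_sub, add_mul, mul_add, sub_mul, ha, one_mul, mul_one]
      abel
    rw [star_mul, ← u.inv_mul_cancel_left (star (1 - a)), key, mul_neg, neg_mul, mul_assoc,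
      mul_assoc, ← star_mul, u.inv_mul, star_one, mul_one]
  · rw [Ring.inverse_mul_eq_iff_eq_mul _ _ _ hu1, h2, h1]

end Cayley

section Quaternion

/-- The real quaternion with the same coordinates as a rational quaternion. -/
noncomputable def Quaternion.ofRat (q : ℍ[ℚ]) : ℍ[ℝ] := ⟨q.re, q.imI, q.imJ, q.imK⟩

@[simp] theorem Quaternion.re_ofRat (q : ℍ[ℚ]) : (ofRat q).re = q.re := rfl

@[simp] theorem Quaternion.imI_ofRat (q : ℍ[ℚ]) : (ofRat q).imI = q.imI := rfl

@[simp] theorem Quaternion.imJ_ofRat (q : ℍ[ℚ]) : (ofRat q).imJ = q.imJ := rfl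

@[simp] theorem Quaternion.imK_ofRat (q : ℍ[ℚ]) : (ofRat q).imK = q.imK := rfl

/-- The inclusion of the rational quaternions into the real quaternions. -/
noncomputable def Quaternion.ratCastHom : ℍ[ℚ] →+* ℍ[ℝ] where
  toFun := ofRat
  map_one' := by ext <;> simp
  map_zero' := by ext <;> simp
  map_mul' p q := by ext <;> simp
  map_add' p q := by ext <;> simp

theorem Quaternion.ratCastHom_apply (q : ℍ[ℚ]) : ratCastHom q = ofRat q := rfl

theorem Quaternion.ratCastHom_star (q : ℍ[ℚ]) : ratCastHom (star q) = star (ratCastHom q) := by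
  ext <;> simp [ratCastHom_apply]

theorem Quaternion.denseRange_ratCastHom : DenseRange ratCastHom := by
  have hcoord : DenseRange (Pi.map fun _ : Fin 4 => ((↑) : ℚ → ℝ)) :=
    DenseRange.piMap fun _ => Rat.denseRange_cast
  have htuple : Continuous fun a : Fin 4 → ℝ =>
      linearIsometryEquivTuple.symm (WithLp.toLp 2 a) :=
    linearIsometryEquivTuple.symm.continuous.comp (PiLp.continuous_toLp 2 _)
  have hsurj : Function.Surjective fun a : Fin 4 → ℝ =>
      linearIsometryEquivTuple.symm (WithLp.toLp 2 a) :=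
    linearIsometryEquivTuple.symm.surjective.comp (WithLp.toLp_surjective 2)
  refine (hsurj.denseRange.comp hcoord htuple).mono ?_
  rintro _ ⟨a, rfl⟩
  exact ⟨⟨a 0, a 1, a 2, a 3⟩, rfl⟩

variable {ι : Type*} [Fintype ι] [DecidableEq ι]

/-- If `S` is a skew-Hermitian quaternionic matrix, then `1 + S` is invertible. -/
theorem Quaternion.isUnit_one_add_of_conjTranspose_eq_neg {F : Type*} [Field F] [LinearOrder F]
    [IsStrictOrderedRing F] {S : Matrix ι ι ℍ[F]} (hS : Sᴴ = -S) : IsUnit (1 + S) := by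
  refine isUnit_of_vecMul_eq_zero fun v hv => ?_
  have h1 : v ⬝ᵥ star v + (v ᵥ* S) ⬝ᵥ star v = 0 := by
    rw [← add_dotProduct]
    simpa [vecMul_add] using congrArg (· ⬝ᵥ star v) hv
  have h2 : v ⬝ᵥ star v - (v ᵥ* S) ⬝ᵥ star v = 0 := by
    have := congrArg star h1
    rw [star_add, ← star_dotProduct_star, ← star_dotProduct_star, star_star, star_vecMul, hS,
      star_zero, neg_mulVec, dotProduct_neg, dotProduct_mulVec, ← sub_eq_add_neg] at this
    exact this
  have hsum : ∑ i, Quaternion.normSq (v i) = 0 := by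
    have hv' : v ⬝ᵥ star v = ((∑ i, Quaternion.normSq (v i) : F) : ℍ[F]) := by
      simp only [dotProduct, Pi.star_apply, Quaternion.self_mul_star]
      exact (map_sum (algebraMap F ℍ[F]) _ _).symm
    have h1re := congrArg QuaternionAlgebra.re h1
    have h2re := congrArg QuaternionAlgebra.re h2
    rw [hv'] at h1re h2re
    simp only [Quaternion.re_add, Quaternion.re_sub, Quaternion.re_zero,
      Quaternion.re_coe] at h1re h2re
    linarith
  funext i
  exact Quaternion.normSq_eq_zero.1
    ((Finset.sum_eq_zero_iff_of_nonneg fun _ _ => Quaternion.normSq_nonneg).1 hsum i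
      (Finset.mem_univ i))

/-- Ring inversion of quaternionic matrices is continuous at every invertible matrix. -/
theorem Quaternion.continuousAt_matrix_inverse {M : Matrix ι ι ℍ[ℝ]} (hM : IsUnit M) :
    ContinuousAt Ring.inverse M :=
  letI : NormedRing (Matrix ι ι ℍ[ℝ]) := Matrix.linftyOpNormedRing
  haveI : @CompleteSpace (Matrix ι ι ℍ[ℝ]) PseudoMetricSpace.toUniformSpace :=
    Matrix.instCompleteSpace _ _ _
  NormedRing.inverse_continuousAt hM.unit

end Quaternion

/-- For every `n ≥ 1`, the quaternionic unitary matrices with rational-quaternion entries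
are dense in the compact symplectic group `Sp(n)`: given an `n × n` matrix `A` over the
real quaternions with `Aᴴ * A = 1` and `ε > 0`, there is a quaternionic matrix `B` with
`Bᴴ * B = 1`, all four coordinates of every entry of `B` rational, and every entry of
`A - B` of norm less than `ε`. -/
theorem sp_rational_quaternion_dense (n : ℕ) (hn : 1 ≤ n)
    (A : Matrix (Fin n) (Fin n) (Quaternion ℝ)) (hA : Aᴴ * A = 1)
    (ε : ℝ) (hε : 0 < ε) :
    ∃ B : Matrix (Fin n) (Fin n) (Quaternion ℝ),
      Bᴴ * B = 1 ∧
      (∀ i j, (∃ q : ℚ, (B i j).re = (q : ℝ)) ∧ (∃ q : ℚ, (B i j).imI = (q : ℝ)) ∧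
        (∃ q : ℚ, (B i j).imJ = (q : ℝ)) ∧ ∃ q : ℚ, (B i j).imK = (q : ℝ)) ∧
      ∀ i j, ‖A i j - B i j‖ < ε := by
  have htwo : IsUnit (2 : ℍ[ℝ]) := by
    rw [← map_ofNat (algebraMap ℝ ℍ[ℝ]) 2]
    exact (isUnit_iff_ne_zero.2 two_ne_zero).map _
  obtain ⟨d, hd, hu⟩ := exists_sign_isUnit_add_diagonal htwo.ne_zero A
  have hdr : ∀ i, ∃ e : ℚ, d i = Quaternion.ratCastHom (e : ℍ[ℚ]) ∧ star (e : ℍ[ℚ]) * e = 1 := by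
    intro i
    rcases hd i with h | h
    · exact ⟨1, by simp [h], by simp⟩
    · exact ⟨-1, by simp [h], by simp⟩
  choose e he he1 using hdr
  let φ : Matrix (Fin n) (Fin n) ℍ[ℚ] →+* Matrix (Fin n) (Fin n) ℍ[ℝ] :=
    Quaternion.ratCastHom.mapMatrix
  have hφ : ∀ X, φ Xᴴ = (φ X)ᴴ := fun X =>
    conjTranspose_map _ Quaternion.ratCastHom_star
  let E : Matrix (Fin n) (Fin n) ℍ[ℚ] := diagonal fun i => (e i : ℍ[ℚ])
  have hE : Eᴴ * E = 1 := by
    simp only [E, diagonal_conjTranspose, diagonal_mul_diagonal, ← diagonal_one]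
    congr 1
    funext i
    exact he1 i
  have hφE : φ E = diagonal d := by
    rw [funext he]
    exact diagonal_map (map_zero _)
  set D := φ E with hD
  have hDD : Dᴴ * D = 1 := by rw [hD, ← hφ, ← map_mul, hE, map_one]
  have hDD' : D * Dᴴ = 1 := mul_eq_one_comm.1 hDD
  have hAA' : A * Aᴴ = 1 := mul_eq_one_comm.1 hA
  have htwo' : IsUnit (2 : Matrix (Fin n) (Fin n) ℍ[ℝ]) := by
    rw [← map_ofNat (scalar (Fin n)) 2]
    exact htwo.map _
  obtain ⟨S, hS, hSu, hSA⟩ := exists_cayley_eq htwo' (a := Dᴴ * A)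
    (by rw [star_mul, star_eq_conjTranspose, star_eq_conjTranspose, conjTranspose_conjTranspose,
      mul_assoc, ← mul_assoc A, hAA', one_mul, hDD])
    (by
      rw [← hDD, ← mul_add, add_comm, hφE]
      rw [hφE] at hDD hDD'
      exact (IsUnit.of_mul_eq_one _ hDD).mul hu)
  let F : Matrix (Fin n) (Fin n) ℍ[ℝ] → Matrix (Fin n) (Fin n) ℍ[ℝ] := fun X =>
    D * (Ring.inverse (1 + (X - Xᴴ)) * (1 - (X - Xᴴ)))
  let X₀ : Matrix (Fin n) (Fin n) ℍ[ℝ] := (1 / 2 : ℝ) • S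
  have hX₀ : X₀ - X₀ᴴ = S := by
    ext1 i j
    have hij : star (S j i) = -S i j := congrFun (congrFun hS i) j
    simp only [X₀, Matrix.sub_apply, conjTranspose_apply, Matrix.smul_apply,
      Quaternion.star_smul, hij]
    module
  have hFX₀ : F X₀ = A := by
    simp only [F, hX₀, hSA]
    rw [← mul_assoc, hDD', one_mul]
  have hFc : ContinuousAt F X₀ := by
    have h : ContinuousAt Ring.inverse (1 + (X₀ - X₀ᴴ)) :=
      Quaternion.continuousAt_matrix_inverse (by rwa [hX₀])
    have hc : Continuous fun X : Matrix (Fin n) (Fin n) ℍ[ℝ] => X - Xᴴ := by fun_prop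
    have h' : ContinuousAt
        (fun X : Matrix (Fin n) (Fin n) ℍ[ℝ] => Ring.inverse (1 + (X - Xᴴ))) X₀ :=
      ContinuousAt.comp (f := fun X => 1 + (X - Xᴴ)) h (continuous_const.add hc).continuousAt
    exact continuousAt_const.mul (h'.mul (continuous_const.sub hc).continuousAt)
  have hdense : DenseRange φ :=
    DenseRange.piMap fun _ => DenseRange.piMap fun _ => Quaternion.denseRange_ratCastHom
  have hnhds : ∀ᶠ Y in nhds A, ∀ i j, ‖A i j - Y i j‖ < ε := by
    simp only [Filter.eventually_all]
    intro i j
    have hc : Continuous fun Y : Matrix (Fin n) (Fin n) ℍ[ℝ] => ‖A i j - Y i j‖ := by fun_prop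
    exact hc.continuousAt.eventually_lt continuousAt_const (by simpa using hε)
  obtain ⟨X, hX⟩ := hdense.mem_nhds (hFc.eventually (by rwa [hFX₀]))
  have hskew : (X - Xᴴ)ᴴ = -(X - Xᴴ) := by simp
  have hXu := Quaternion.isUnit_one_add_of_conjTranspose_eq_neg hskew
  let C := E * (Ring.inverse (1 + (X - Xᴴ)) * (1 - (X - Xᴴ)))
  have hC : Cᴴ * C = 1 := by
    have := star_cayley_mul_cayley hskew hXu
    rw [star_eq_conjTranspose] at this
    rw [conjTranspose_mul, mul_assoc, ← mul_assoc Eᴴ, hE, one_mul, this]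
  have hφC : F (φ X) = φ C := by
    have h1 : φ (1 + (X - Xᴴ)) = 1 + (φ X - (φ X)ᴴ) := by simp [hφ]
    have h2 : φ (1 - (X - Xᴴ)) = 1 - (φ X - (φ X)ᴴ) := by simp [hφ]
    simp only [F, C, map_mul, ← h1, ← h2]
    congr 1
    rw [Ring.inverse_mul_eq_iff_eq_mul _ _ _ (hXu.map φ), ← mul_assoc, ← map_mul,
      Ring.mul_inverse_cancel _ hXu, map_one, one_mul]
  refine ⟨φ C, by rw [← hφ, ← map_mul, hC, map_one], fun i j => ?_, hφC ▸ hX⟩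
  exact ⟨⟨(C i j).re, rfl⟩, ⟨(C i j).imI, rfl⟩, ⟨(C i j).imJ, rfl⟩, ⟨(C i j).imK, rfl⟩⟩
end
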